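/- arXiv:0802.3149 — 2 statements merged into one kernel-verified Lean document; each statement's English description precedes it below -/
import Mathlib

section
/- Let A, B be binary forms of order 7 (homogeneous polynomials of degree 7 in x₁, x₂ over a field of characteristic zero). Writing 𝒞_q = (A,B)_q for the q-th transvectant of A and B, the identity 𝒞₁·𝒞₇ = −28·(𝒞₁,𝒞₁)₆ − (210/11)·(𝒞₁,𝒞₃)₄ + 8·(𝒞₁,𝒞₅)₂ + (1960/121)·(𝒞₃,𝒞₃)₂ + (35/11)·𝒞₃·𝒞₅ holds. -/
open MvPolynomial Finset

/-- The `q`-th transvectant of two binary forms of orders `m` and `n`: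
`(F,G)_q = ((m−q)!(n−q)!/(m!·n!)) · Σ_{i=0}^{q} (−1)^i C(q,i)
  (∂^q F/∂x₁^{q−i}∂x₂^{i}) (∂^q G/∂x₁^{i}∂x₂^{q−i})`. -/
noncomputable def transvectant {k : Type*} [Field k] [CharZero k]
    (m n q : ℕ) (F G : MvPolynomial (Fin 2) k) : MvPolynomial (Fin 2) k :=
  C ((((m - q).factorial * (n - q).factorial : ℕ) : k) /
      ((m.factorial * n.factorial : ℕ) : k)) *
    ∑ i ∈ Finset.range (q + 1),
      C ((-1 : k) ^ i * (q.choose i : k)) *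
        ((fun P => pderiv (0 : Fin 2) P)^[q - i] ((fun P => pderiv (1 : Fin 2) P)^[i] F)) *
        ((fun P => pderiv (0 : Fin 2) P)^[i] ((fun P => pderiv (1 : Fin 2) P)^[q - i] G))

/-!
For a binary form `F` of order `m` put `aᵢ = ((m-i)!/m!) ∂ⁱF/∂x₂ⁱ`; up to powers of `x₁` these are
the coefficients of `F` translated along `x₂` to a general point. Define `bⱼ` in the same way from
`G`. Euler's identity expresses `∂/∂x₁` through `∂/∂x₂`, and eliminating it from a transvectant
leaves `x₁^q (F,G)_q = Σ_{i+j=q} (-1)^i C(q,i) aᵢ bⱼ`. Since `∂aᵢ/∂x₂ = (m-i) aᵢ₊₁`, the sequence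
belonging to `(F,G)_q` is, up to `x₁^q`, again an explicit bilinear expression in the sequences of
`F` and `G`, so nested transvectants are covered too. Every term of the identity thus becomes
`x₁⁻⁸` times a polynomial in `a₀, …, a₇, b₀, …, b₇`, and the resulting polynomial identity is
checked by expansion.
-/

section Derivations

theorem iterate_derivation_mul {R A : Type*} [CommSemiring R] [CommSemiring A] [Algebra R A]
    (D : Derivation R A A) (f g : A) (n : ℕ) :
    D^[n] (f * g) = ∑ st ∈ antidiagonal n, n.choose st.1 • (D^[st.1] f * D^[st.2] g) := by
  induction n with
  | zero => simp
  | succ n ih =>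
    rw [sum_antidiagonal_choose_succ_nsmul fun s t => D^[s] f * D^[t] g,
      Function.iterate_succ_apply', ih, map_sum, ← sum_add_distrib]
    refine sum_congr rfl fun st hst => ?_
    rw [map_nsmul, D.leibniz, Nat.choose_symm_of_eq_add (mem_antidiagonal.mp hst).symm,
      smul_eq_mul, smul_eq_mul, mul_comm (D^[st.2] g), nsmul_add,
      Function.iterate_succ_apply', Function.iterate_succ_apply']

variable {σ R : Type*}

theorem pderiv_comm [CommRing R] (i j : σ) (F : MvPolynomial σ R) :
    pderiv i (pderiv j F) = pderiv j (pderiv i F) := by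
  classical
  have h : ⁅pderiv (R := R) i, pderiv (R := R) j⁆ = 0 := by
    refine derivation_ext fun l => ?_
    simp [Derivation.commutator_apply, pderiv_X, Pi.single_apply, apply_ite]
  simpa [Derivation.commutator_apply, sub_eq_zero] using DFunLike.congr_fun h F

theorem pderiv_iterate_pderiv [CommRing R] (i j : σ) (a : ℕ) (F : MvPolynomial σ R) :
    pderiv i ((pderiv j)^[a] F) = (pderiv j)^[a] (pderiv i F) :=
  (show Function.Commute (pderiv i) (pderiv j) from pderiv_comm i j).iterate_right a F

theorem isHomogeneous_iterate_pderiv [CommSemiring R] {F : MvPolynomial σ R} {m : ℕ}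
    (hF : F.IsHomogeneous m) (i : σ) (a : ℕ) :
    ((pderiv i)^[a] F).IsHomogeneous (m - a) := by
  induction a with
  | zero => exact hF
  | succ a ih => rw [Function.iterate_succ_apply']; exact ih.pderiv

theorem pderiv_eq_zero_of_isHomogeneous_zero [CommSemiring R] {F : MvPolynomial σ R}
    (hF : F.IsHomogeneous 0) (i : σ) : pderiv i F = 0 := by
  rw [totalDegree_eq_zero_iff_eq_C.mp (Nat.le_zero.mp hF.totalDegree_le), pderiv_C]

end Derivations

section NormalizedDeriv

variable {k : Type*} [Field k]

/-- The normalized derivative `((m-i)!/m!) ∂ⁱF/∂x₂ⁱ` of a binary form `F` of order `m`. With this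
normalization the form `F = Σ C(m,i) aᵢ x₁^(m-i) x₂^i` has normalized derivatives `aᵢ` at `(1,0)`.
-/
noncomputable def normalizedDeriv (m : ℕ) (F : MvPolynomial (Fin 2) k) (i : ℕ) :
    MvPolynomial (Fin 2) k :=
  ((m - i).factorial / m.factorial : k) • (pderiv 1)^[i] F

theorem pderiv_normalizedDeriv {m : ℕ} {F : MvPolynomial (Fin 2) k} (hF : F.IsHomogeneous m)
    (i : ℕ) :
    pderiv 1 (normalizedDeriv m F i) = (m - i) • normalizedDeriv m F (i + 1) := by
  rw [normalizedDeriv, Derivation.map_smul, normalizedDeriv]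
  rcases lt_or_ge i m with hi | hi
  · have hfac : (m - i).factorial = (m - i) * (m - (i + 1)).factorial := by
      rw [← Nat.mul_factorial_pred (Nat.sub_ne_zero_of_lt hi), Nat.sub_sub]
    rw [← Function.iterate_succ_apply' (pderiv 1), ← Nat.cast_smul_eq_nsmul k, smul_smul, hfac,
      Nat.cast_mul, mul_div_assoc]
  · have hconst := isHomogeneous_iterate_pderiv hF 1 i
    rw [Nat.sub_eq_zero_of_le hi] at hconst ⊢
    rw [pderiv_eq_zero_of_isHomogeneous_zero hconst, smul_zero, zero_smul]

theorem iterate_pderiv_normalizedDeriv {m : ℕ} {F : MvPolynomial (Fin 2) k}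
    (hF : F.IsHomogeneous m) (i s : ℕ) :
    (pderiv 1)^[s] (normalizedDeriv m F i) =
      (m - i).descFactorial s • normalizedDeriv m F (i + s) := by
  induction s with
  | zero => simp
  | succ s ih =>
    rw [Function.iterate_succ_apply', ih, map_nsmul, pderiv_normalizedDeriv hF, smul_smul,
      Nat.descFactorial_succ, Nat.sub_sub, mul_comm, add_assoc]

variable [CharZero k]

theorem normalizedDeriv_zero (m : ℕ) (F : MvPolynomial (Fin 2) k) :
    normalizedDeriv m F 0 = F := by
  simp [normalizedDeriv, Nat.factorial_ne_zero]

theorem normalizedDeriv_pderiv_one (m : ℕ) (F : MvPolynomial (Fin 2) k) (i : ℕ) :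
    normalizedDeriv m (pderiv 1 F) i = (m + 1 : k) • normalizedDeriv (m + 1) F (i + 1) := by
  have hm : (m + 1 : k) ≠ 0 := m.cast_add_one_ne_zero
  rw [normalizedDeriv, normalizedDeriv, smul_smul, Function.iterate_succ_apply,
    Nat.add_sub_add_right, Nat.factorial_succ m]
  congr 1
  push_cast
  field_simp

theorem X_mul_normalizedDeriv_pderiv_zero {m i : ℕ} (hi : i ≤ m) {F : MvPolynomial (Fin 2) k}
    (hF : F.IsHomogeneous (m + 1)) :
    X 0 * normalizedDeriv m (pderiv 0 F) i =
      (m + 1 : k) • (normalizedDeriv (m + 1) F i - X 1 * normalizedDeriv (m + 1) F (i + 1)) := by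
  have hm : (m + 1 : k) ≠ 0 := m.cast_add_one_ne_zero
  have euler := (isHomogeneous_iterate_pderiv hF 1 i).sum_X_mul_pderiv
  rw [Fin.sum_univ_two, pderiv_iterate_pderiv, ← Function.iterate_succ_apply' (pderiv 1),
    ← Nat.cast_smul_eq_nsmul k] at euler
  have hfac : ((m + 1 - i).factorial : k) = (m + 1 - i : ℕ) * (m - i).factorial := by
    rw [Nat.sub_add_comm hi, Nat.factorial_succ, Nat.cast_mul]
  simp only [normalizedDeriv]
  rw [Nat.add_sub_add_right, hfac, Nat.factorial_succ m, mul_smul_comm, mul_smul_comm,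
    eq_sub_of_add_eq euler]
  match_scalars
  · field_simp
  · field_simp

end NormalizedDeriv

section Transvectant

variable {k : Type*} [Field k] [CharZero k]

theorem transvectant_eq_sum_antidiagonal (m n q : ℕ) (F G : MvPolynomial (Fin 2) k) :
    transvectant m n q F G =
      ((m - q).factorial * (n - q).factorial / (m.factorial * n.factorial) : k) •
        ∑ ij ∈ antidiagonal q, q.choose ij.1 • (-1 : k) ^ ij.1 •
          ((pderiv 0)^[ij.2] ((pderiv 1)^[ij.1] F) * (pderiv 0)^[ij.1] ((pderiv 1)^[ij.2] G)) := by
  rw [transvectant, smul_eq_C_mul, Nat.sum_antidiagonal_eq_sum_range_succ_mk]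
  congr 1
  · push_cast; rfl
  · refine sum_congr rfl fun i _ => ?_
    rw [← Nat.cast_smul_eq_nsmul k, smul_smul, smul_eq_C_mul, mul_comm (_ ^ i), mul_assoc]

theorem transvectant_zero (m n : ℕ) (F G : MvPolynomial (Fin 2) k) :
    transvectant m n 0 F G = F * G := by
  simp [transvectant, Nat.factorial_ne_zero]

theorem transvectant_succ (m n q : ℕ) (F G : MvPolynomial (Fin 2) k) :
    transvectant (m + 1) (n + 1) (q + 1) F G = ((m + 1) * (n + 1) : k)⁻¹ •
      (transvectant m n q (pderiv 0 F) (pderiv 1 G) -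
        transvectant m n q (pderiv 1 F) (pderiv 0 G)) := by
  simp only [transvectant_eq_sum_antidiagonal]
  rw [sum_antidiagonal_choose_succ_nsmul fun i j => (-1 : k) ^ i •
    ((pderiv 0)^[j] ((pderiv 1)^[i] F) * (pderiv 0)^[i] ((pderiv 1)^[j] G)), ← smul_sub, smul_smul,
    ← sum_add_distrib, ← sum_sub_distrib, Nat.add_sub_add_right, Nat.add_sub_add_right]
  refine congrArg₂ (· • ·) ?_ ?_
  · rw [Nat.factorial_succ, Nat.factorial_succ]
    push_cast
    field_simp
  · refine sum_congr rfl fun ij hij => ?_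
    rw [← Nat.choose_symm_of_eq_add (mem_antidiagonal.mp hij).symm]
    simp only [Function.iterate_succ_apply, pderiv_iterate_pderiv, pow_succ]
    module

theorem isHomogeneous_transvectant {m n : ℕ} {F G : MvPolynomial (Fin 2) k}
    (hF : F.IsHomogeneous m) (hG : G.IsHomogeneous n) {q : ℕ} (hm : q ≤ m) (hn : q ≤ n) :
    (transvectant m n q F G).IsHomogeneous (m + n - 2 * q) := by
  induction q generalizing m n F G with
  | zero => rw [transvectant_zero]; exact hF.mul hG
  | succ q ih =>
    obtain ⟨m, rfl⟩ := Nat.exists_eq_add_one_of_ne_zero (Nat.ne_zero_of_lt hm)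
    obtain ⟨n, rfl⟩ := Nat.exists_eq_add_one_of_ne_zero (Nat.ne_zero_of_lt hn)
    rw [transvectant_succ, smul_eq_C_mul, show m + 1 + (n + 1) - 2 * (q + 1) = m + n - 2 * q by lia]
    have hm := Nat.le_of_succ_le_succ hm
    have hn := Nat.le_of_succ_le_succ hn
    exact ((ih (m := m) (n := n) hF.pderiv hG.pderiv hm hn).sub
      (ih (m := m) (n := n) hF.pderiv hG.pderiv hm hn)).C_mul _

theorem X_pow_mul_transvectant {m n : ℕ} {F G : MvPolynomial (Fin 2) k}
    (hF : F.IsHomogeneous m) (hG : G.IsHomogeneous n) {q : ℕ} (hm : q ≤ m) (hn : q ≤ n) :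
    X 0 ^ q * transvectant m n q F G =
      ∑ ij ∈ antidiagonal q, q.choose ij.1 • (-1 : k) ^ ij.1 •
        (normalizedDeriv m F ij.1 * normalizedDeriv n G ij.2) := by
  induction q generalizing m n F G with
  | zero => simp [transvectant_zero, normalizedDeriv_zero]
  | succ q ih =>
    obtain ⟨m, rfl⟩ := Nat.exists_eq_add_one_of_ne_zero (Nat.ne_zero_of_lt hm)
    obtain ⟨n, rfl⟩ := Nat.exists_eq_add_one_of_ne_zero (Nat.ne_zero_of_lt hn)
    have hm := Nat.le_of_succ_le_succ hm
    have hn := Nat.le_of_succ_le_succ hn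
    have hmn : ((m + 1) * (n + 1) : k) ≠ 0 :=
      mul_ne_zero m.cast_add_one_ne_zero n.cast_add_one_ne_zero
    rw [transvectant_succ, mul_smul_comm, inv_smul_eq_iff₀ hmn, pow_succ', mul_assoc, mul_sub,
      ih (m := m) (n := n) hF.pderiv hG.pderiv hm hn,
      ih (m := m) (n := n) hF.pderiv hG.pderiv hm hn,
      sum_antidiagonal_choose_succ_nsmul fun i j =>
        (-1 : k) ^ i • (normalizedDeriv (m + 1) F i * normalizedDeriv (n + 1) G j),
      ← sum_add_distrib, ← sum_sub_distrib, mul_sum, smul_sum]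
    refine sum_congr rfl fun ij hij => ?_
    have hsum := mem_antidiagonal.mp hij
    have hF₀ := X_mul_normalizedDeriv_pderiv_zero (show ij.1 ≤ m by lia) hF
    have hG₀ := X_mul_normalizedDeriv_pderiv_zero (show ij.2 ≤ n by lia) hG
    rw [← Nat.choose_symm_of_eq_add hsum.symm, normalizedDeriv_pderiv_one,
      normalizedDeriv_pderiv_one, ← smul_add, ← smul_sub, mul_smul_comm, smul_comm (_ * _)]
    congr 1
    simp only [smul_eq_C_mul, C_mul, C_pow, C_neg, C_1, pow_succ] at hF₀ hG₀ ⊢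
    -- The terms of `hF₀` and `hG₀` with a factor `X 1` cancel.
    linear_combination ((-1) ^ ij.1 * C (n + 1 : k) *
        normalizedDeriv (n + 1) G (ij.2 + 1)) * hF₀ -
      ((-1) ^ ij.1 * C (m + 1 : k) * normalizedDeriv (m + 1) F (ij.1 + 1)) * hG₀

end Transvectant

section CoeffTransvectant

/-- The transvectant on the level of normalized derivatives: if `a` and `b` are the sequences of
normalized derivatives of binary forms of orders `m` and `n`, then the terms of this sequence are
those of the `q`-th transvectant, of order `m+n-2q`, up to the factor `x₁^q`. -/
def coeffTransvectant (k : Type*) {R : Type*} [Field k] [CommRing R] [Algebra k R]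
    (m n q : ℕ) (a b : ℕ → R) (r : ℕ) : R :=
  ((m + n - 2 * q - r).factorial / (m + n - 2 * q).factorial : k) •
    ∑ ij ∈ antidiagonal q, q.choose ij.1 • (-1 : k) ^ ij.1 •
      ∑ st ∈ antidiagonal r,
        (r.choose st.1 * ((m - ij.1).descFactorial st.1 * (n - ij.2).descFactorial st.2)) •
          (a (ij.1 + st.1) * b (ij.2 + st.2))

theorem coeffTransvectant_smul_smul {k R : Type*} [Field k] [CommRing R] [Algebra k R]
    (m n q : ℕ) (c d : R) (a b : ℕ → R) :
    coeffTransvectant k m n q (c • a) (d • b) = (c * d) • coeffTransvectant k m n q a b := by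
  ext r
  simp only [coeffTransvectant, Pi.smul_apply, smul_mul_smul_comm, smul_sum, smul_comm (c * d)]

variable {k : Type*} [Field k] [CharZero k]

theorem X_pow_smul_normalizedDeriv_transvectant {m n : ℕ} {F G : MvPolynomial (Fin 2) k}
    (hF : F.IsHomogeneous m) (hG : G.IsHomogeneous n) {q : ℕ} (hm : q ≤ m) (hn : q ≤ n) :
    (X 0 ^ q : MvPolynomial (Fin 2) k) •
        normalizedDeriv (m + n - 2 * q) (transvectant m n q F G) =
      coeffTransvectant k m n q (normalizedDeriv m F) (normalizedDeriv n G) := by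
  ext1 r
  have hX : (X 0 ^ q : MvPolynomial (Fin 2) k) * (pderiv 1)^[r] (transvectant m n q F G) =
      (pderiv 1)^[r] (X 0 ^ q * transvectant m n q F G) := by
    refine Function.Commute.iterate_right (f := (X 0 ^ q * ·)) (fun P => ?_) r _
    simp [pderiv_X]
  rw [Pi.smul_apply, smul_eq_mul, normalizedDeriv, mul_smul_comm, hX,
    X_pow_mul_transvectant hF hG hm hn, coeffTransvectant, ← Derivation.coeFn_coe,
    ← Module.End.coe_pow]
  simp only [map_sum, map_nsmul, map_smul]
  simp only [Module.End.coe_pow, Derivation.coeFn_coe, iterate_derivation_mul,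
    iterate_pderiv_normalizedDeriv hF, iterate_pderiv_normalizedDeriv hG, smul_mul_smul_comm,
    smul_smul]

theorem X_pow_mul_transvectant_of_smul_eq {m n : ℕ} {F G : MvPolynomial (Fin 2) k}
    (hF : F.IsHomogeneous m) (hG : G.IsHomogeneous n) {q : ℕ} (hm : q ≤ m) (hn : q ≤ n)
    {c d : MvPolynomial (Fin 2) k} {a b : ℕ → MvPolynomial (Fin 2) k}
    (ha : c • normalizedDeriv m F = a) (hb : d • normalizedDeriv n G = b) :
    c * d * X 0 ^ q * transvectant m n q F G = coeffTransvectant k m n q a b 0 := by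
  rw [← ha, ← hb, coeffTransvectant_smul_smul,
    ← X_pow_smul_normalizedDeriv_transvectant hF hG hm hn]
  simp only [Pi.smul_apply, normalizedDeriv_zero, smul_eq_mul, mul_assoc]

theorem coeffTransvectant_syzygy {R : Type*} [CommRing R] [Algebra k R] (a b : ℕ → R) :
    coeffTransvectant k 7 7 1 a b 0 * coeffTransvectant k 7 7 7 a b 0 =
      (-28 : k) • coeffTransvectant k 12 12 6
          (coeffTransvectant k 7 7 1 a b) (coeffTransvectant k 7 7 1 a b) 0
        - (210 / 11 : k) • coeffTransvectant k 12 8 4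
            (coeffTransvectant k 7 7 1 a b) (coeffTransvectant k 7 7 3 a b) 0
        + (8 : k) • coeffTransvectant k 12 4 2
            (coeffTransvectant k 7 7 1 a b) (coeffTransvectant k 7 7 5 a b) 0
        + (1960 / 121 : k) • coeffTransvectant k 8 8 2
            (coeffTransvectant k 7 7 3 a b) (coeffTransvectant k 7 7 3 a b) 0
        + (35 / 11 : k) •
            (coeffTransvectant k 7 7 3 a b 0 * coeffTransvectant k 7 7 5 a b 0) := by
  simp only [coeffTransvectant, Nat.sum_antidiagonal_eq_sum_range_succ_mk, sum_range_succ,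
    sum_range_zero, zero_add, Nat.reduceAdd, Nat.reduceSub, Nat.reduceMul, Nat.choose,
    Nat.descFactorial, Nat.factorial, Nat.succ_eq_add_one, Nat.cast_ofNat]
  algebra

end CoeffTransvectant

/-- For binary forms `A, B` of order `7`, writing `𝒞_q = (A,B)_q`, one has
`𝒞₁·𝒞₇ = −28·(𝒞₁,𝒞₁)₆ − (210/11)·(𝒞₁,𝒞₃)₄ + 8·(𝒞₁,𝒞₅)₂ + (1960/121)·(𝒞₃,𝒞₃)₂ + (35/11)·𝒞₃·𝒞₅`. -/
theorem syzygy_d7_r5 {k : Type*} [Field k] [CharZero k]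
    (A B : MvPolynomial (Fin 2) k)
    (hA : A.IsHomogeneous 7) (hB : B.IsHomogeneous 7) :
    transvectant 7 7 1 A B * transvectant 7 7 7 A B =
      C (-(28 : k)) *
          transvectant 12 12 6 (transvectant 7 7 1 A B) (transvectant 7 7 1 A B)
        - C ((210 / 11 : k)) *
            transvectant 12 8 4 (transvectant 7 7 1 A B) (transvectant 7 7 3 A B)
        + C ((8 : k)) *
            transvectant 12 4 2 (transvectant 7 7 1 A B) (transvectant 7 7 5 A B)
        + C ((1960 / 121 : k)) *
            transvectant 8 8 2 (transvectant 7 7 3 A B) (transvectant 7 7 3 A B)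
        + C ((35 / 11 : k)) * transvectant 7 7 3 A B * transvectant 7 7 5 A B := by
  have h₁ := X_pow_smul_normalizedDeriv_transvectant (q := 1) hA hB (by norm_num) (by norm_num)
  have h₃ := X_pow_smul_normalizedDeriv_transvectant (q := 3) hA hB (by norm_num) (by norm_num)
  have h₅ := X_pow_smul_normalizedDeriv_transvectant (q := 5) hA hB (by norm_num) (by norm_num)
  have h₇ := X_pow_smul_normalizedDeriv_transvectant (q := 7) hA hB (by norm_num) (by norm_num)
  have hc₁ := isHomogeneous_transvectant (q := 1) hA hB (by norm_num) (by norm_num)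
  have hc₃ := isHomogeneous_transvectant (q := 3) hA hB (by norm_num) (by norm_num)
  have hc₅ := isHomogeneous_transvectant (q := 5) hA hB (by norm_num) (by norm_num)
  have h := coeffTransvectant_syzygy (k := k) (normalizedDeriv 7 A) (normalizedDeriv 7 B)
  rw [← X_pow_mul_transvectant_of_smul_eq hc₁ hc₁ (by norm_num) (by norm_num) h₁ h₁,
    ← X_pow_mul_transvectant_of_smul_eq hc₁ hc₃ (by norm_num) (by norm_num) h₁ h₃,
    ← X_pow_mul_transvectant_of_smul_eq hc₁ hc₅ (by norm_num) (by norm_num) h₁ h₅,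
    ← X_pow_mul_transvectant_of_smul_eq hc₃ hc₃ (by norm_num) (by norm_num) h₃ h₃,
    ← h₁, ← h₃, ← h₅, ← h₇] at h
  simp only [Pi.smul_apply, normalizedDeriv_zero, smul_eq_mul, smul_eq_C_mul] at h
  refine mul_left_cancel₀ (pow_ne_zero 8 (X_ne_zero 0)) ?_
  linear_combination h
end

section
/- Lemma (part a). Let 𝒢 be a polynomial in x₁, x₂, y₁, y₂ over a field of characteristic zero which is bihomogeneous of orders (p,q), and let m ≥ 1. Then Ω_{xy}((x y)^m · 𝒢) = m·(p+q+m+1)·(x y)^{m−1}·𝒢 + (x y)^m·Ω_{xy}𝒢, where Ω_{xy} = ∂²/∂x₁∂y₂ − ∂²/∂y₁∂x₂ and (x y) = x₁y₂ − y₁x₂. -/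
/-!
Commuting `Ω` past a single bracket leaves `E + 2`, where `E` is the Euler operator in all four
variables: `Ω ((x y) F) = (E + 2) F + (x y) Ω F`. On a form `F` of degree `d` the operator `E` is
multiplication by `d`. Since `(x y)^j G` has degree `d + 2j` when `G` has total degree `d`, pulling
the `m` brackets through one at a time contributes `∑_{j < m} (d + 2j + 2) = m (d + m + 1)` copies
of `(x y)^(m-1) G`.
-/

open MvPolynomial

/-- The Cayley Omega operator `Ω_{xy} = ∂²/∂x₁∂y₂ − ∂²/∂y₁∂x₂`, where the four
variables are indexed as `x₁ = 0`, `x₂ = 1`, `y₁ = 2`, `y₂ = 3`. -/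
noncomputable def Omega {k : Type*} [CommRing k] (G : MvPolynomial (Fin 4) k) :
    MvPolynomial (Fin 4) k :=
  pderiv (0 : Fin 4) (pderiv 3 G) - pderiv 2 (pderiv 1 G)

/-- The bracket factor `(x y) = x₁y₂ − y₁x₂`. -/
noncomputable def bracket {k : Type*} [CommRing k] : MvPolynomial (Fin 4) k :=
  X 0 * X 3 - X 2 * X 1

/-- A polynomial in `x₁, x₂, y₁, y₂` is bihomogeneous of orders `(p,q)` if it is
homogeneous of degree `p` in `(x₁,x₂)` and of degree `q` in `(y₁,y₂)`. -/
def Bihomogeneous {k : Type*} [CommRing k] (G : MvPolynomial (Fin 4) k)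
    (p q : ℕ) : Prop :=
  G.IsWeightedHomogeneous ![1, 1, 0, 0] p ∧ G.IsWeightedHomogeneous ![0, 0, 1, 1] q

theorem isWeightedHomogeneous_add_weight {σ R M : Type*} [CommSemiring R] [AddCommMonoid M]
    {w₁ w₂ : σ → M} {φ : MvPolynomial σ R} {m₁ m₂ : M}
    (h₁ : φ.IsWeightedHomogeneous w₁ m₁) (h₂ : φ.IsWeightedHomogeneous w₂ m₂) :
    φ.IsWeightedHomogeneous (w₁ + w₂) (m₁ + m₂) := by
  intro d hd
  rw [← h₁ hd, ← h₂ hd]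
  simp only [Finsupp.weight_apply, Pi.add_apply, smul_add, Finsupp.sum_add]

section CommRing

variable {k : Type*} [CommRing k]

theorem Bihomogeneous.isHomogeneous {G : MvPolynomial (Fin 4) k} {p q : ℕ}
    (hG : Bihomogeneous G p q) : G.IsHomogeneous (p + q) := by
  have weights_add : ![1, 1, 0, 0] + ![0, 0, 1, 1] = (1 : Fin 4 → ℕ) := by decide
  rw [IsHomogeneous, ← weights_add]
  exact isWeightedHomogeneous_add_weight hG.1 hG.2

theorem isHomogeneous_bracket : (bracket : MvPolynomial (Fin 4) k).IsHomogeneous 2 :=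
  ((isHomogeneous_X k 0).mul (isHomogeneous_X k 3)).sub
    ((isHomogeneous_X k 2).mul (isHomogeneous_X k 1))

theorem omega_bracket_mul (G : MvPolynomial (Fin 4) k) :
    Omega (bracket * G) = ∑ i, X i * pderiv i G + 2 * G + bracket * Omega G := by
  have pderiv_zero_bracket : pderiv 0 (bracket : MvPolynomial (Fin 4) k) = X 3 := by
    simp [bracket, pderiv_X]
  have pderiv_one_bracket : pderiv 1 (bracket : MvPolynomial (Fin 4) k) = -X 2 := by
    simp [bracket, pderiv_X]
  have pderiv_two_bracket : pderiv 2 (bracket : MvPolynomial (Fin 4) k) = -X 1 := by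
    simp [bracket, pderiv_X]
  have pderiv_three_bracket : pderiv 3 (bracket : MvPolynomial (Fin 4) k) = X 0 := by
    simp [bracket, pderiv_X]
  simp only [Omega, pderiv_mul, map_add, map_neg, pderiv_zero_bracket, pderiv_one_bracket,
    pderiv_two_bracket, pderiv_three_bracket, pderiv_X_self, Fin.sum_univ_four]
  ring

theorem omega_bracket_mul_of_isHomogeneous {G : MvPolynomial (Fin 4) k} {d : ℕ}
    (hG : G.IsHomogeneous d) :
    Omega (bracket * G) = ((d + 2 : ℕ) : MvPolynomial (Fin 4) k) * G + bracket * Omega G := by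
  rw [omega_bracket_mul, hG.sum_X_mul_pderiv, nsmul_eq_mul]
  push_cast
  ring

theorem omega_bracket_pow_comm_general {G : MvPolynomial (Fin 4) k} {d m : ℕ} (hm : 1 ≤ m)
    (hG : G.IsHomogeneous d) :
    Omega (bracket ^ m * G)
      = C ((m * (d + m + 1) : ℕ) : k) * bracket ^ (m - 1) * G + bracket ^ m * Omega G := by
  rw [map_natCast]
  induction m, hm using Nat.le_induction with
  | base => simpa [add_assoc] using omega_bracket_mul_of_isHomogeneous hG
  | succ m hm ih =>
    have bracket_pow_mul_homogeneous : (bracket ^ m * G).IsHomogeneous (2 * m + d) :=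
      (isHomogeneous_bracket.pow m).mul hG
    have bracket_mul_pow_pred : bracket * bracket ^ (m - 1) = (bracket : MvPolynomial _ k) ^ m :=
      mul_pow_sub_one (Nat.one_le_iff_ne_zero.mp hm) bracket
    calc Omega (bracket ^ (m + 1) * G)
        = Omega (bracket * (bracket ^ m * G)) := by rw [pow_succ', mul_assoc]
      _ = ((2 * m + d + 2 : ℕ) : MvPolynomial (Fin 4) k) * (bracket ^ m * G)
            + bracket * Omega (bracket ^ m * G) :=
          omega_bracket_mul_of_isHomogeneous bracket_pow_mul_homogeneous
      _ = (((m + 1) * (d + (m + 1) + 1) : ℕ) : MvPolynomial (Fin 4) k) * bracket ^ (m + 1 - 1) * G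
            + bracket ^ (m + 1) * Omega G := by
          rw [ih, Nat.add_sub_cancel]
          push_cast
          linear_combination (m : MvPolynomial (Fin 4) k) * (d + m + 1) * G * bracket_mul_pow_pred

end CommRing

/-- Lemma (part a): `Ω_{xy}((x y)^m·𝒢) = m(p+q+m+1)·(x y)^{m−1}·𝒢 + (x y)^m·Ω_{xy}𝒢`
for `𝒢` bihomogeneous of orders `(p,q)` and `m ≥ 1`. -/
theorem omega_bracket_pow_comm {k : Type*} [Field k] [CharZero k]
    (G : MvPolynomial (Fin 4) k) (p q m : ℕ) (hm : 1 ≤ m)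
    (hG : Bihomogeneous G p q) :
    Omega (bracket ^ m * G)
      = C (((m * (p + q + m + 1) : ℕ) : k)) * bracket ^ (m - 1) * G
        + bracket ^ m * Omega G :=
  omega_bracket_pow_comm_general hm hG.isHomogeneous
end
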